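/- arXiv:2511.11390 — 4 statements merged into one kernel-verified Lean document; each statement's English description precedes it below -/
import Mathlib

section
/- Soundness of the safety-game winning region: Let A = (Q, q0, δ, safe(F)) be a deterministic safety automaton over Σ, M_p = (S^p, s0^p, τ^p, o^p) ∈ ℙ a plant, and Win ⊆ Q × S^p the winning region of the safety game of A and M_p. If (q, s) ∈ Win, then there exists a controller M_c ∈ ℂ such that Runs(A, q, M_p(s) ∥ M_c) ⊆ safe(F). -/
/-- A Moore machine over atomic propositions `AP`, with input propositions `I ⊆ AP`
and output propositions `O ⊆ AP`.  Letters in `2^I` are encoded as sets `σ : Set AP`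
where the transition function is invariant under intersecting with `I`, and the
output labeling produces subsets of `O`. -/
structure Moore (AP : Type) (I O : Set AP) : Type 1 where
  S : Type
  fin : Finite S
  s0 : S
  tr : S → Set AP → S
  out : S → Set AP
  tr_inv : ∀ s σ, tr s σ = tr s (σ ∩ I)
  out_sub : ∀ s, out s ⊆ O

namespace Moore

variable {AP : Type} {I O : Set AP}

/-- `M.at' s` is `M` with initial state replaced by `s` (written `M(s)` in the paper). -/
def at' (M : Moore AP I O) (s : M.S) : Moore AP I O :=
  { M with s0 := s }

/-- The run of `M` on an infinite word `γ`: at step `j` the machine reads input `γ j ∩ I`. -/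
def run (M : Moore AP I O) (γ : ℕ → Set AP) : ℕ → M.S
  | 0 => M.s0
  | j + 1 => M.tr (M.run γ j) (γ j ∩ I)

/-- `Traces(M)`: all `γ` whose `O`-component agrees with the outputs along the run of `M`. -/
def Traces (M : Moore AP I O) : Set (ℕ → Set AP) :=
  { γ | ∀ j, γ j ∩ O = M.out (M.run γ j) }

end Moore

/-- Parallel composition `M1 ∥ M2` of Moore machines of two distinct processes. -/
def par {AP : Type} {I1 O1 I2 O2 : Set AP} (M1 : Moore AP I1 O1) (M2 : Moore AP I2 O2) :
    Moore AP ((I1 ∪ I2) \ (O1 ∪ O2)) (O1 ∪ O2) where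
  S := M1.S × M2.S
  fin := by haveI := M1.fin; haveI := M2.fin; exact inferInstance
  s0 := (M1.s0, M2.s0)
  tr p σ :=
    (M1.tr p.1 ((σ ∩ ((I1 ∪ I2) \ (O1 ∪ O2)) ∪ M2.out p.2) ∩ I1),
     M2.tr p.2 ((σ ∩ ((I1 ∪ I2) \ (O1 ∪ O2)) ∪ M1.out p.1) ∩ I2))
  out p := M1.out p.1 ∪ M2.out p.2
  tr_inv := by intro s σ; simp [Set.inter_assoc]
  out_sub p := Set.union_subset_union (M1.out_sub p.1) (M2.out_sub p.2)

/-- A deterministic safety automaton `A = (Q, q0, δ, safe(F))` over alphabet `2^AP`. -/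
structure DSA (AP : Type) : Type 1 where
  Q : Type
  fin : Finite Q
  q0 : Q
  δ : Q → Set AP → Q
  F : Set Q

namespace DSA

variable {AP : Type}

/-- The run of `A` from state `q` on the infinite word `γ`. -/
def run (A : DSA AP) (q : A.Q) (γ : ℕ → Set AP) : ℕ → A.Q
  | 0 => q
  | i + 1 => A.δ (A.run q γ i) (γ i)

/-- `L(A)`: all words whose run from `q0` stays in the safe states `F`. -/
def Lang (A : DSA AP) : Set (ℕ → Set AP) :=
  { γ | ∀ i, A.run A.q0 γ i ∈ A.F }

end DSA

/-- `Runs(A, q, M) ⊆ safe(F)`: every run of `A` from `q` on a trace of `M` stays in `F`. -/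
def SafeRuns {AP : Type} {I O : Set AP} (A : DSA AP) (q : A.Q) (M : Moore AP I O) : Prop :=
  ∀ γ ∈ M.Traces, ∀ i, A.run q γ i ∈ A.F

/-- `M_c ⊨ (A(q), κ) ∥ M_p`: the controller `M_c` is consistent with the
prophecy-annotated controller `(A(q), κ)` w.r.t. the plant `M_p`: at every
reachable triple of the product of `A` (started at `q`) with `M_c ∥ M_p`,
the residual plant satisfies the prophecy for the current controller output. -/
def Consistent {AP : Type} (Oe Oc Op : Set AP) (A : DSA AP) (q : A.Q)
    (κ : A.Q → Set AP → Set (Moore AP (Oe ∪ Oc) Op))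
    (Mc : Moore AP (Oe ∪ Op) Oc) (Mp : Moore AP (Oe ∪ Oc) Op) : Prop :=
  ∀ γ ∈ (par Mc Mp).Traces, ∀ i,
    Mp.at' ((par Mc Mp).run γ i).2 ∈
      κ (A.run q γ i) (Mc.out ((par Mc Mp).run γ i).1)

/-- `(A, κ)` is correct for the plant `M_p` w.r.t. the specification `φ`. -/
def CorrectFor {AP : Type} (Oe Oc Op : Set AP) (A : DSA AP)
    (κ : A.Q → Set AP → Set (Moore AP (Oe ∪ Oc) Op))
    (φ : Set (ℕ → Set AP)) (Mp : Moore AP (Oe ∪ Oc) Op) : Prop :=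
  ∀ Mc : Moore AP (Oe ∪ Op) Oc,
    Consistent Oe Oc Op A A.q0 κ Mc Mp → (par Mp Mc).Traces ⊆ φ

/-- `(A, κ)` is most permissive for the plant `M_p` w.r.t. the specification `φ`. -/
def MostPermissiveFor {AP : Type} (Oe Oc Op : Set AP) (A : DSA AP)
    (κ : A.Q → Set AP → Set (Moore AP (Oe ∪ Oc) Op))
    (φ : Set (ℕ → Set AP)) (Mp : Moore AP (Oe ∪ Oc) Op) : Prop :=
  ∀ Mc : Moore AP (Oe ∪ Op) Oc,
    (par Mp Mc).Traces ⊆ φ → Consistent Oe Oc Op A A.q0 κ Mc Mp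

/-- `X` is a safe controllable region of the safety game of `A` and `M_p`:
`X ⊆ F × S^p`, and from every `(q,s) ∈ X` some controller output `α ⊆ O_c`
keeps the game in `X` for every environment output `β ⊆ O_e`. -/
def WinStep {AP : Type} (Oe Oc Op : Set AP) (A : DSA AP)
    (Mp : Moore AP (Oe ∪ Oc) Op) (X : Set (A.Q × Mp.S)) : Prop :=
  (∀ p ∈ X, p.1 ∈ A.F) ∧
    ∀ p ∈ X, ∃ α ⊆ Oc, ∀ β ⊆ Oe,
      (A.δ p.1 (α ∪ β ∪ Mp.out p.2), Mp.tr p.2 (α ∪ β)) ∈ X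

/-- The winning region of the safety game of `A` and `M_p`: the largest
(safe controllable) set `X` with `WinStep`, i.e. the union of all of them. -/
def Win {AP : Type} (Oe Oc Op : Set AP) (A : DSA AP)
    (Mp : Moore AP (Oe ∪ Oc) Op) : Set (A.Q × Mp.S) :=
  ⋃₀ { X | WinStep Oe Oc Op A Mp X }

/-- The exact prophecy annotation `κ*` of `A`: all plants for which some
controller with initial output `α` keeps every run of `A` from `q` inside `F`. -/
def κStar {AP : Type} (Oe Oc Op : Set AP) (A : DSA AP) (q : A.Q) (α : Set AP) :
    Set (Moore AP (Oe ∪ Oc) Op) :=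
  { Mp | ∃ Mc : Moore AP (Oe ∪ Op) Oc, Mc.out Mc.s0 = α ∧ SafeRuns A q (par Mp Mc) }

/-- `Add_{M_p}(q, α)`: the residual plants `M_p(s)` such that `q ∈ F` and output `α`
leads into the winning region for every environment output `β ⊆ O_e`. -/
def AddSet {AP : Type} (Oe Oc Op : Set AP) (A : DSA AP)
    (Mp : Moore AP (Oe ∪ Oc) Op) (q : A.Q) (α : Set AP) :
    Set (Moore AP (Oe ∪ Oc) Op) :=
  { M | ∃ s : Mp.S, M = Mp.at' s ∧ q ∈ A.F ∧
      ∀ β ⊆ Oe, (A.δ q (α ∪ β ∪ Mp.out s), Mp.tr s (α ∪ β)) ∈ Win Oe Oc Op A Mp }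

/-- `Rem_{M_p}(q, α)`: the residual plants `M_p(s)` such that output `α` leaves the
winning region for some environment output `β ⊆ O_e`. -/
def RemSet {AP : Type} (Oe Oc Op : Set AP) (A : DSA AP)
    (Mp : Moore AP (Oe ∪ Oc) Op) (q : A.Q) (α : Set AP) :
    Set (Moore AP (Oe ∪ Oc) Op) :=
  { M | ∃ s : Mp.S, M = Mp.at' s ∧
      ∃ β ⊆ Oe, (A.δ q (α ∪ β ∪ Mp.out s), Mp.tr s (α ∪ β)) ∉ Win Oe Oc Op A Mp }

theorem aux_e1 {AP : Type} {Oe Oc Op g o : Set AP}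
    (hec : Disjoint Oe Oc) (hep : Disjoint Oe Op) (ho : o ⊆ Oc) (J : Set AP)
    (hJ : J = ((Oe ∪ Oc) ∪ (Oe ∪ Op)) \ (Op ∪ Oc)) :
    (g ∩ J ∩ J ∪ o) ∩ (Oe ∪ Oc) = o ∪ (g ∩ Oe) := by
  ext x
  have a1 : x ∈ Oe → x ∉ _ := fun hx => Set.disjoint_left.1 hec hx
  have a2 : x ∈ Oe → x ∉ _ := fun hx => Set.disjoint_left.1 hep hx
  have a4 := @ho x
  simp only [hJ, Set.mem_inter_iff, Set.mem_union, Set.mem_sdiff]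
  clear hec hep ho hJ
  grind

theorem aux_e2 {AP : Type} {Oe Oc Op g o : Set AP}
    (hec : Disjoint Oe Oc) (hep : Disjoint Oe Op) (ho : o ⊆ Op) (J : Set AP)
    (hJ : J = ((Oe ∪ Oc) ∪ (Oe ∪ Op)) \ (Op ∪ Oc)) :
    (g ∩ J ∩ J ∪ o) ∩ (Oe ∪ Op) ∩ Oe = g ∩ Oe := by
  ext x
  have a1 : x ∈ Oe → x ∉ _ := fun hx => Set.disjoint_left.1 hec hx
  have a2 : x ∈ Oe → x ∉ _ := fun hx => Set.disjoint_left.1 hep hx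
  have a4 := @ho x
  simp only [hJ, Set.mem_inter_iff, Set.mem_union, Set.mem_sdiff]
  clear hec hep ho hJ
  grind

/-- Soundness of the safety-game winning region. -/
theorem winning_region_sound
    {AP : Type} [Finite AP] (Oe Oc Op : Set AP)
    (hec : Disjoint Oe Oc) (hep : Disjoint Oe Op) (hcp : Disjoint Oc Op)
    (hcov : Oe ∪ Oc ∪ Op = Set.univ)
    (A : DSA AP) (Mp : Moore AP (Oe ∪ Oc) Op)
    (q : A.Q) (s : Mp.S) (h : (q, s) ∈ Win Oe Oc Op A Mp) :
    ∃ Mc : Moore AP (Oe ∪ Op) Oc, SafeRuns A q (par (Mp.at' s) Mc) := by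
  classical
  obtain ⟨X, ⟨hF, hX⟩, hqs⟩ := h
  choose! α hα hstep using hX
  let out : A.Q × Mp.S → Set AP := fun p => α p ∩ Oc
  have hout : ∀ p ∈ X, out p = α p := fun p hp => Set.inter_eq_left.2 (hα p hp)
  let Mc : Moore AP (Oe ∪ Op) Oc :=
    { S := A.Q × Mp.S
      fin := by haveI := A.fin; haveI := Mp.fin; exact inferInstance
      s0 := (q, s)
      tr := fun p σ => (A.δ p.1 (out p ∪ (σ ∩ Oe) ∪ Mp.out p.2), Mp.tr p.2 (out p ∪ (σ ∩ Oe)))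
      out := out
      tr_inv := by
        intro p σ
        have : σ ∩ (Oe ∪ Op) ∩ Oe = σ ∩ Oe := by ext x; simp; tauto
        simp only [this]
      out_sub := fun p => Set.inter_subset_right }
  refine ⟨Mc, fun γ hγ => ?_⟩
  have key : ∀ i, ∃ p ∈ X, (par (Mp.at' s) Mc).run γ i = (p.2, p) ∧ A.run q γ i = p.1 := by
    intro i
    induction i with
    | zero => exact ⟨(q, s), hqs, rfl, rfl⟩
    | succ i ih =>
      obtain ⟨p, hp, h1, h2⟩ := ih
      have hg := hγ i
      rw [h1] at hg
      change γ i ∩ (Op ∪ Oc) = Mp.out p.2 ∪ out p at hg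
      have hγi : γ i = out p ∪ (γ i ∩ Oe) ∪ Mp.out p.2 := by
        ext x
        have hx := Set.ext_iff.1 hg x
        have hc : x ∈ Oe ∪ Oc ∪ Op := hcov ▸ Set.mem_univ x
        simp only [Set.mem_inter_iff, Set.mem_union] at hx hc ⊢
        tauto
      have hcO : out p ⊆ Oc := Set.inter_subset_right
      have hpO := Mp.out_sub p.2
      have hs := hstep p hp (γ i ∩ Oe) Set.inter_subset_right
      rw [← hout p hp] at hs
      refine ⟨_, hs, ?_, ?_⟩
      · change (par (Mp.at' s) Mc).tr ((par (Mp.at' s) Mc).run γ i) _ = _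
        rw [h1]
        set J : Set AP := ((Oe ∪ Oc) ∪ (Oe ∪ Op)) \ (Op ∪ Oc) with hJ
        have e1 : (γ i ∩ J ∩ J ∪ out p) ∩ (Oe ∪ Oc) = out p ∪ (γ i ∩ Oe) := 
          aux_e1 hec hep hcO J hJ
        have e2 : (γ i ∩ J ∩ J ∪ Mp.out p.2) ∩ (Oe ∪ Op) ∩ Oe = γ i ∩ Oe := 
          aux_e2 hec hep hpO J hJ
        change (Mp.tr p.2 ((γ i ∩ J ∩ J ∪ out p) ∩ (Oe ∪ Oc)),
          (A.δ p.1 (out p ∪ ((γ i ∩ J ∩ J ∪ Mp.out p.2) ∩ (Oe ∪ Op) ∩ Oe) ∪ Mp.out p.2),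
            Mp.tr p.2 (out p ∪ ((γ i ∩ J ∩ J ∪ Mp.out p.2) ∩ (Oe ∪ Op) ∩ Oe)))) = _
        rw [e1, e2]
      · change A.δ (A.run q γ i) (γ i) = A.δ p.1 (out p ∪ (γ i ∩ Oe) ∪ Mp.out p.2)
        rw [h2, ← hγi]
  intro i
  obtain ⟨p, hp, -, h2⟩ := key i
  rw [h2]
  exact hF p hp
end

section
/- Completeness of the safety-game winning region: Let A = (Q, q0, δ, safe(F)) be a deterministic safety automaton over Σ, M_p = (S^p, s0^p, τ^p, o^p) ∈ ℙ a plant, and Win ⊆ Q × S^p the winning region of the safety game of A and M_p. If there exists a controller M_c ∈ ℂ such that Runs(A, q, M_p(s) ∥ M_c) ⊆ safe(F), then (q, s) ∈ Win. -/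
/-- Prepend a letter to an infinite word. -/
def consWord {AP : Type} (a : Set AP) (γ : ℕ → Set AP) : ℕ → Set AP
  | 0 => a
  | j + 1 => γ j

theorem Moore.run_cons {AP : Type} {I O : Set AP} (M : Moore AP I O) (a : Set AP)
    (γ : ℕ → Set AP) (j : ℕ) :
    M.run (consWord a γ) (j + 1) = (M.at' (M.tr M.s0 (a ∩ I))).run γ j := by
  induction j with
  | zero => rfl
  | succ j ih =>
    change M.tr (M.run (consWord a γ) (j + 1)) (γ j ∩ I) = _
    rw [ih]
    rfl

theorem DSA.run_cons {AP : Type} (A : DSA AP) (q : A.Q) (a : Set AP)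
    (γ : ℕ → Set AP) (j : ℕ) :
    A.run q (consWord a γ) (j + 1) = A.run (A.δ q a) γ j := by
  induction j with
  | zero => rfl
  | succ j ih =>
    change A.δ (A.run q (consWord a γ) (j + 1)) (γ j) = _
    rw [ih]
    rfl

/-- State sequence of the closed system in which no other input is raised. -/
def Moore.stSeq {AP : Type} {I O : Set AP} (M : Moore AP I O) : ℕ → M.S
  | 0 => M.s0
  | j + 1 => M.tr (M.stSeq j) (M.out (M.stSeq j) ∩ I)

theorem Moore.exists_trace {AP : Type} {I O : Set AP} (M : Moore AP I O) :
    ∃ γ, γ ∈ M.Traces := by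
  have key : ∀ j, M.run (fun j => M.out (M.stSeq j)) j = M.stSeq j := by
    intro j
    induction j with
    | zero => rfl
    | succ j ih =>
      change M.tr (M.run (fun j => M.out (M.stSeq j)) j) _ = _
      rw [ih]
      rfl
  refine ⟨fun j => M.out (M.stSeq j), fun j => ?_⟩
  rw [key]
  exact Set.inter_eq_left.mpr (M.out_sub _)

theorem SafeRuns.step {AP : Type} {I O : Set AP} {A : DSA AP} {q : A.Q} {M : Moore AP I O}
    (h : SafeRuns A q M) (a : Set AP) (ha : a ∩ O = M.out M.s0) :
    SafeRuns A (A.δ q a) (M.at' (M.tr M.s0 (a ∩ I))) := by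
  intro γ hγ i
  rw [← DSA.run_cons]
  refine h _ (fun j => ?_) (i + 1)
  cases j with
  | zero => exact ha
  | succ j =>
    rw [Moore.run_cons]
    exact hγ j

theorem plant_input {AP : Type} {Oe Oc Op α β π : Set AP}
    (hec : ∀ ⦃a : AP⦄, a ∈ Oe → a ∉ Oc) (hep : ∀ ⦃a : AP⦄, a ∈ Oe → a ∉ Op)
    (hc : α ⊆ Oc) (hp : π ⊆ Op) (hβ : β ⊆ Oe) :
    (α ∪ β) ∩ (Oe ∪ Oc) =
      ((α ∪ β ∪ π) ∩ (((Oe ∪ Oc) ∪ (Oe ∪ Op)) \ (Op ∪ Oc)) ∩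
        (((Oe ∪ Oc) ∪ (Oe ∪ Op)) \ (Op ∪ Oc)) ∪ α) ∩ (Oe ∪ Oc) := by
  ext x
  have h1 := @hc x
  have h2 := @hp x
  have h3 := @hβ x
  have h4 := @hec x
  have h5 := @hep x
  simp only [Set.mem_inter_iff, Set.mem_union, Set.mem_sdiff]
  clear hc hp hβ hec hep
  grind

/-- Completeness of the safety-game winning region. -/
theorem winning_region_complete
    {AP : Type} [Finite AP] (Oe Oc Op : Set AP)
    (hec : Disjoint Oe Oc) (hep : Disjoint Oe Op) (hcp : Disjoint Oc Op)
    (hcov : Oe ∪ Oc ∪ Op = Set.univ)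
    (A : DSA AP) (Mp : Moore AP (Oe ∪ Oc) Op)
    (q : A.Q) (s : Mp.S)
    (h : ∃ Mc : Moore AP (Oe ∪ Op) Oc, SafeRuns A q (par (Mp.at' s) Mc)) :
    (q, s) ∈ Win Oe Oc Op A Mp := by
  refine Set.mem_sUnion.mpr
    ⟨{p | ∃ Mc : Moore AP (Oe ∪ Op) Oc, SafeRuns A p.1 (par (Mp.at' p.2) Mc)}, ⟨?_, ?_⟩, h⟩
  · rintro ⟨q, s⟩ ⟨Mc, hMc⟩
    obtain ⟨γ, hγ⟩ := (par (Mp.at' s) Mc).exists_trace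
    exact hMc γ hγ 0
  · rintro ⟨q, s⟩ ⟨Mc, hMc⟩
    refine ⟨Mc.out Mc.s0, Mc.out_sub _, fun β hβ => ?_⟩
    have hc := Mc.out_sub Mc.s0
    have hp := Mp.out_sub s
    rw [Set.disjoint_left] at hec hep hcp
    have ha : (Mc.out Mc.s0 ∪ β ∪ Mp.out s) ∩ (Op ∪ Oc) = Mp.out s ∪ Mc.out Mc.s0 := by
      ext x
      have h1 := @hc x
      have h2 := @hp x
      have h3 := @hβ x
      have h4 := @hec x
      have h5 := @hep x
      simp only [Set.mem_inter_iff, Set.mem_union]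
      tauto
    have hs := hMc.step _ ha
    refine ⟨Mc.at' ((par (Mp.at' s) Mc).tr (par (Mp.at' s) Mc).s0
          ((Mc.out Mc.s0 ∪ β ∪ Mp.out s) ∩ (((Oe ∪ Oc) ∪ (Oe ∪ Op)) \ (Op ∪ Oc)))).2, ?_⟩
    · have e : Mp.tr s (Mc.out Mc.s0 ∪ β) = ((par (Mp.at' s) Mc).tr (par (Mp.at' s) Mc).s0
          ((Mc.out Mc.s0 ∪ β ∪ Mp.out s) ∩ (((Oe ∪ Oc) ∪ (Oe ∪ Op)) \ (Op ∪ Oc)))).1 := by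
        rw [Mp.tr_inv]
        change Mp.tr s _ = Mp.tr s _
        exact congrArg (Mp.tr s) (plant_input hec hep hc hp hβ)
      dsimp only
      rw [e]
      exact hs
end

section
/- Theorem (refinement preserves approximation and is monotone): Let A = (Q, q0, δ, safe(F)) be a deterministic safety automaton over Σ with exact prophecy annotation κ*, and let κ_under, κ_over be prophecy annotations with κ_under(q, α) ⊆ κ*(q, α) ⊆ κ_over(q, α) for all q ∈ Q and α ⊆ O_c. Let M_p ∈ ℙ be a plant and let (κ'_under, κ'_over) be the refinement of (κ_under, κ_over) by M_p. Then for all q ∈ Q and α ⊆ O_c: κ_under(q, α) ⊆ κ'_under(q, α) ⊆ κ*(q, α) ⊆ κ'_over(q, α) ⊆ κ_over(q, α). -/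
theorem par_step {AP : Type} {Oe Oc Op : Set AP}
    (hec : Disjoint Oe Oc) (hep : Disjoint Oe Op) (hcp : Disjoint Oc Op)
    (Mp : Moore AP (Oe ∪ Oc) Op) (Mc : Moore AP (Oe ∪ Op) Oc)
    (s : Mp.S) (c : Mc.S) (σ : Set AP) :
    (par Mp Mc).tr (s, c) σ =
      (Mp.tr s (Mc.out c ∪ (σ ∩ Oe)), Mc.tr c (Mp.out s ∪ (σ ∩ Oe))) := by
  have h1 := Mc.out_sub c
  have h2 := Mp.out_sub s
  rw [Set.disjoint_left] at hec hep hcp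
  refine Prod.ext ?_ ?_
  · change Mp.tr s _ = Mp.tr s _
    congr 1
    ext x
    have := @h1 x; have := @h2 x; have := @hec x; have := @hep x; have := @hcp x
    simp only [Set.mem_inter_iff, Set.mem_union, Set.mem_sdiff]
    tauto
  · change Mc.tr c _ = Mc.tr c _
    congr 1
    ext x
    have := @h1 x; have := @h2 x; have := @hec x; have := @hep x; have := @hcp x
    simp only [Set.mem_inter_iff, Set.mem_union, Set.mem_sdiff]
    tauto

theorem SafeRuns.step_s6 {AP : Type} {Oe Oc Op : Set AP}
    (hec : Disjoint Oe Oc) (hep : Disjoint Oe Op) (hcp : Disjoint Oc Op)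
    (A : DSA AP) (q : A.Q)
    (Mp : Moore AP (Oe ∪ Oc) Op) (Mc : Moore AP (Oe ∪ Op) Oc) (s : Mp.S)
    (h : SafeRuns A q (par (Mp.at' s) Mc)) (β : Set AP) (hβ : β ⊆ Oe) :
    SafeRuns A (A.δ q (Mc.out Mc.s0 ∪ β ∪ Mp.out s))
      (par (Mp.at' (Mp.tr s (Mc.out Mc.s0 ∪ β))) (Mc.at' (Mc.tr Mc.s0 (Mp.out s ∪ β)))) := by
  intro γ hγ i
  let σ : Set AP := Mc.out Mc.s0 ∪ β ∪ Mp.out s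
  let γ' : ℕ → Set AP := fun n => Nat.casesOn n σ γ
  have h1 := Mc.out_sub Mc.s0
  have h2 := Mp.out_sub s
  rw [Set.disjoint_left] at hec hep hcp
  have hσ : σ ∩ Oe = β := by
    ext x
    have := @h1 x; have := @h2 x; have := @hec x; have := @hep x; have := @hβ x
    simp only [σ, Set.mem_inter_iff, Set.mem_union]
    tauto
  have hσ2 : σ ∩ (((Oe ∪ Oc) ∪ (Oe ∪ Op)) \ (Op ∪ Oc)) ∩ Oe = β := by
    ext x
    have := @h1 x; have := @h2 x; have := @hec x; have := @hep x; have := @hβ x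
    simp only [σ, Set.mem_inter_iff, Set.mem_union, Set.mem_sdiff]
    tauto
  have hσ3 : σ ∩ (Op ∪ Oc) = Mp.out s ∪ Mc.out Mc.s0 := by
    ext x
    have := @h1 x; have := @h2 x; have := @hec x; have := @hep x; have := @hβ x
    simp only [σ, Set.mem_inter_iff, Set.mem_union]
    tauto
  have hrun : ∀ j, (par (Mp.at' s) Mc).run γ' (j + 1) =
      (par (Mp.at' (Mp.tr s (Mc.out Mc.s0 ∪ β)))
        (Mc.at' (Mc.tr Mc.s0 (Mp.out s ∪ β)))).run γ j := by
    intro j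
    induction j with
    | zero =>
      have := par_step (Set.disjoint_left.2 hec) (Set.disjoint_left.2 hep)
        (Set.disjoint_left.2 hcp) (Mp.at' s) Mc s Mc.s0
        (σ ∩ (((Oe ∪ Oc) ∪ (Oe ∪ Op)) \ (Op ∪ Oc)))
      rw [hσ2] at this
      exact this
    | succ j ih =>
      rw [Moore.run, ih]
      rfl
  have hA : ∀ j, A.run q γ' (j + 1) = A.run (A.δ q σ) γ j := by
    intro j
    induction j with
    | zero => rfl
    | succ j ih => rw [DSA.run, ih]; rfl
  have := h γ' (by
    intro j
    cases j with
    | zero => exact hσ3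
    | succ j => rw [hrun]; exact hγ j) (i + 1)
  rw [hA] at this
  exact this

theorem mem_win_of_safeRuns {AP : Type} {Oe Oc Op : Set AP}
    (hec : Disjoint Oe Oc) (hep : Disjoint Oe Op) (hcp : Disjoint Oc Op)
    (A : DSA AP) (Mp : Moore AP (Oe ∪ Oc) Op) (q : A.Q) (s : Mp.S)
    (Mc : Moore AP (Oe ∪ Op) Oc) (h : SafeRuns A q (par (Mp.at' s) Mc)) :
    (q, s) ∈ Win Oe Oc Op A Mp := by
  refine ⟨{p | ∃ Mc : Moore AP (Oe ∪ Op) Oc, SafeRuns A p.1 (par (Mp.at' p.2) Mc)},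
    ⟨?_, ?_⟩, ⟨Mc, h⟩⟩
  · rintro ⟨q, s⟩ ⟨Mc, h⟩
    obtain ⟨γ, hγ⟩ := (par (Mp.at' s) Mc).exists_trace
    exact h γ hγ 0
  · rintro ⟨q, s⟩ ⟨Mc, h⟩
    exact ⟨Mc.out Mc.s0, Mc.out_sub _, fun β hβ =>
      ⟨_, SafeRuns.step_s6 hec hep hcp A q Mp Mc s h β hβ⟩⟩

theorem winStep_win {AP : Type} (Oe Oc Op : Set AP) (A : DSA AP)
    (Mp : Moore AP (Oe ∪ Oc) Op) : WinStep Oe Oc Op A Mp (Win Oe Oc Op A Mp) := by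
  refine ⟨?_, ?_⟩
  · rintro p ⟨X, hX, hp⟩
    exact hX.1 p hp
  · rintro p ⟨X, hX, hp⟩
    obtain ⟨α, hα, h⟩ := hX.2 p hp
    exact ⟨α, hα, fun β hβ => ⟨X, hX, h β hβ⟩⟩

/-- The controller that simulates the game and follows the positional strategy `f`. -/
def stratCtrl {AP : Type} [Finite AP] (Oe Oc Op : Set AP) (A : DSA AP)
    (Mp : Moore AP (Oe ∪ Oc) Op) (f : A.Q × Mp.S → {α : Set AP // α ⊆ Oc})
    (q : A.Q) (s : Mp.S) (α : {α : Set AP // α ⊆ Oc}) : Moore AP (Oe ∪ Op) Oc where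
  S := (A.Q × Mp.S) × {α : Set AP // α ⊆ Oc}
  fin := by haveI := A.fin; haveI := Mp.fin; exact inferInstance
  s0 := ((q, s), α)
  tr c σ :=
    ((A.δ c.1.1 (c.2.1 ∪ (σ ∩ Oe) ∪ Mp.out c.1.2), Mp.tr c.1.2 (c.2.1 ∪ (σ ∩ Oe))),
      f (A.δ c.1.1 (c.2.1 ∪ (σ ∩ Oe) ∪ Mp.out c.1.2), Mp.tr c.1.2 (c.2.1 ∪ (σ ∩ Oe))))
  out c := c.2.1
  tr_inv := by
    intro c σ
    have : σ ∩ (Oe ∪ Op) ∩ Oe = σ ∩ Oe := by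
      ext x
      simp only [Set.mem_inter_iff, Set.mem_union]
      tauto
    simp only [this]
  out_sub c := c.2.2

theorem addSet_subset {AP : Type} [Finite AP] {Oe Oc Op : Set AP}
    (hec : Disjoint Oe Oc) (hep : Disjoint Oe Op) (hcp : Disjoint Oc Op)
    (hcov : Oe ∪ Oc ∪ Op = Set.univ)
    (A : DSA AP) (Mp : Moore AP (Oe ∪ Oc) Op) (q : A.Q) (α : Set AP) (hα : α ⊆ Oc) :
    AddSet Oe Oc Op A Mp q α ⊆ κStar Oe Oc Op A q α := by
  rintro M ⟨s, rfl, hq, hs⟩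
  have hW := winStep_win Oe Oc Op A Mp
  have hf : ∀ p : A.Q × Mp.S, ∃ a : {α : Set AP // α ⊆ Oc}, p ∈ Win Oe Oc Op A Mp →
      ∀ β ⊆ Oe, (A.δ p.1 (a.1 ∪ β ∪ Mp.out p.2), Mp.tr p.2 (a.1 ∪ β)) ∈ Win Oe Oc Op A Mp := by
    intro p
    by_cases hp : p ∈ Win Oe Oc Op A Mp
    · obtain ⟨a, ha, h⟩ := hW.2 p hp
      exact ⟨⟨a, ha⟩, fun _ => h⟩
    · exact ⟨⟨α, hα⟩, fun h => absurd h hp⟩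
  choose f hf using hf
  refine ⟨stratCtrl Oe Oc Op A Mp f q s ⟨α, hα⟩, rfl, ?_⟩
  intro γ hγ i
  have key : ∀ i, ∃ (s' : Mp.S) (a : {α : Set AP // α ⊆ Oc}),
      (par (Mp.at' s) (stratCtrl Oe Oc Op A Mp f q s ⟨α, hα⟩)).run γ i =
        (s', ((A.run q γ i, s'), a)) ∧ A.run q γ i ∈ A.F ∧
      ∀ β ⊆ Oe, (A.δ (A.run q γ i) (a.1 ∪ β ∪ Mp.out s'), Mp.tr s' (a.1 ∪ β))
        ∈ Win Oe Oc Op A Mp := by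
    intro i
    induction i with
    | zero => exact ⟨s, ⟨α, hα⟩, rfl, hq, hs⟩
    | succ i ih =>
      obtain ⟨s', a, hr, -, hw⟩ := ih
      have ht := hγ i
      rw [hr] at ht
      replace ht : γ i ∩ (Op ∪ Oc) = Mp.out s' ∪ a.1 := ht
      have hlet : γ i = a.1 ∪ (γ i ∩ Oe) ∪ Mp.out s' := by
        ext x
        have e1 := Set.ext_iff.1 ht x
        have e2 := Set.ext_iff.1 hcov x
        simp only [Set.mem_inter_iff, Set.mem_union, Set.mem_univ, iff_true] at e1 e2 ⊢
        tauto
      have hstep := par_step hec hep hcp (Mp.at' s)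
        (stratCtrl Oe Oc Op A Mp f q s ⟨α, hα⟩) s' ((A.run q γ i, s'), a)
        (γ i ∩ (((Oe ∪ Oc) ∪ (Oe ∪ Op)) \ (Op ∪ Oc)))
      have hx : γ i ∩ (((Oe ∪ Oc) ∪ (Oe ∪ Op)) \ (Op ∪ Oc)) ∩ Oe = γ i ∩ Oe := by
        rw [Set.disjoint_left] at hec hep
        ext x
        have := @hec x; have := @hep x
        simp only [Set.mem_inter_iff, Set.mem_union, Set.mem_sdiff]
        tauto
      have hy : (Mp.out s' ∪ γ i ∩ Oe) ∩ Oe = γ i ∩ Oe := by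
        rw [Set.disjoint_left] at hep
        ext x
        have hh := Mp.out_sub s'
        have := @hep x; have := @hh x
        simp only [Set.mem_inter_iff, Set.mem_union]
        tauto
      rw [hx] at hstep
      have hwin := hw (γ i ∩ Oe) Set.inter_subset_right
      have hq' : A.run q γ (i + 1) =
          A.δ (A.run q γ i) (a.1 ∪ (γ i ∩ Oe) ∪ Mp.out s') := by
        rw [← hlet]; rfl
      rw [← hq'] at hwin
      refine ⟨Mp.tr s' (a.1 ∪ (γ i ∩ Oe)), f (A.run q γ (i + 1), Mp.tr s' (a.1 ∪ (γ i ∩ Oe))),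
        ?_, hW.1 _ hwin, hf _ hwin⟩
      rw [Moore.run, hr]
      refine hstep.trans ?_
      refine Prod.ext rfl ?_
      change ((A.δ (A.run q γ i) (a.1 ∪ ((Mp.out s' ∪ γ i ∩ Oe) ∩ Oe) ∪ Mp.out s'),
          Mp.tr s' (a.1 ∪ ((Mp.out s' ∪ γ i ∩ Oe) ∩ Oe))),
        f (A.δ (A.run q γ i) (a.1 ∪ ((Mp.out s' ∪ γ i ∩ Oe) ∩ Oe) ∪ Mp.out s'),
          Mp.tr s' (a.1 ∪ ((Mp.out s' ∪ γ i ∩ Oe) ∩ Oe)))) = _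
      rw [hy, ← hq']
  obtain ⟨_, _, _, h, _⟩ := key i
  exact h

/-- refinement preserves approximation and is monotone. -/
theorem refinement_preserves_approximation
    {AP : Type} [Finite AP] (Oe Oc Op : Set AP)
    (hec : Disjoint Oe Oc) (hep : Disjoint Oe Op) (hcp : Disjoint Oc Op)
    (hcov : Oe ∪ Oc ∪ Op = Set.univ)
    (A : DSA AP)
    (κunder κover : A.Q → Set AP → Set (Moore AP (Oe ∪ Oc) Op))
    (hu : ∀ q : A.Q, ∀ α ⊆ Oc, κunder q α ⊆ κStar Oe Oc Op A q α)
    (ho : ∀ q : A.Q, ∀ α ⊆ Oc, κStar Oe Oc Op A q α ⊆ κover q α)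
    (Mp : Moore AP (Oe ∪ Oc) Op) :
    ∀ q : A.Q, ∀ α ⊆ Oc,
      κunder q α ⊆ κunder q α ∪ AddSet Oe Oc Op A Mp q α ∧
      κunder q α ∪ AddSet Oe Oc Op A Mp q α ⊆ κStar Oe Oc Op A q α ∧
      κStar Oe Oc Op A q α ⊆ κover q α \ RemSet Oe Oc Op A Mp q α ∧
      κover q α \ RemSet Oe Oc Op A Mp q α ⊆ κover q α := by
  intro q α hα
  refine ⟨Set.subset_union_left,
    Set.union_subset (hu q α hα) (addSet_subset hec hep hcp hcov A Mp q α hα),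
    fun M hM => ⟨ho q α hα hM, ?_⟩, Set.sdiff_subset⟩
  rintro ⟨s, rfl, β, hβ, hn⟩
  obtain ⟨Mc, rfl, h⟩ := hM
  exact hn (mem_win_of_safeRuns hec hep hcp A Mp _ _ _
    (SafeRuns.step_s6 hec hep hcp A q Mp Mc s h β hβ))
end

section
/- Theorem (the refined over-approximation is correct for the refining plant): Let φ be a specification and A = (Q, q0, δ, safe(F)) a deterministic safety automaton over Σ with L(A) = L(φ) and q0 ∈ F. Let M_p ∈ ℙ be a plant, κ_over any prophecy annotation, and κ'_over(q, α) = κ_over(q, α) \ Rem_{M_p}(q, α) for all q ∈ Q, α ⊆ O_c. Then the prophecy-annotated controller (A, κ'_over) is correct for M_p: every controller M_c ∈ ℂ with M_c ⊨ (A, κ'_over) ∥ M_p satisfies M_p ∥ M_c ⊨ φ. -/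
theorem par_run_swap {AP : Type} {I1 O1 I2 O2 : Set AP}
    (M1 : Moore AP I1 O1) (M2 : Moore AP I2 O2) (γ : ℕ → Set AP) (i : ℕ) :
    (par M1 M2).run γ i = (((par M2 M1).run γ i).2, ((par M2 M1).run γ i).1) := by
  induction i with
  | zero => rfl
  | succ n ih =>
    simp only [Moore.run]
    rw [ih]
    simp only [par, Set.union_comm I1 I2, Set.union_comm O1 O2]

/-- the refined over-approximation is correct for the refining plant. -/
theorem refined_over_approximation_correct
    {AP : Type} [Finite AP] (Oe Oc Op : Set AP)
    (hec : Disjoint Oe Oc) (hep : Disjoint Oe Op) (hcp : Disjoint Oc Op)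
    (hcov : Oe ∪ Oc ∪ Op = Set.univ)
    (φ : Set (ℕ → Set AP)) (A : DSA AP)
    (hL : A.Lang = φ) (hq0 : A.q0 ∈ A.F)
    (Mp : Moore AP (Oe ∪ Oc) Op)
    (κover : A.Q → Set AP → Set (Moore AP (Oe ∪ Oc) Op)) :
    CorrectFor Oe Oc Op A
      (fun q α => κover q α \ RemSet Oe Oc Op A Mp q α) φ Mp := by
  intro Mc hc γ hγ
  rw [← hL]
  have hγ' : γ ∈ (par Mc Mp).Traces := by
    intro j
    have h := hγ j
    rw [par_run_swap Mp Mc] at h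
    have h' : γ j ∩ (Oc ∪ Op) = γ j ∩ (Op ∪ Oc) := by rw [Set.union_comm Oc Op]
    exact h'.trans (h.trans (Set.union_comm _ _))
  intro i
  cases i with
  | zero => exact hq0
  | succ n =>
    have h1 := (hc γ hγ' n).2
    have hout := hγ' n
    by_contra hF
    apply h1
    refine ⟨_, rfl, γ n ∩ Oe, Set.inter_subset_right, ?_⟩
    rintro ⟨X, hX, hmem⟩
    apply hF
    have h2 := hX.1 _ hmem
    have heq : γ n = Mc.out ((par Mc Mp).run γ n).1 ∪ γ n ∩ Oe
        ∪ Mp.out ((par Mc Mp).run γ n).2 := by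
      have h3 : Mc.out ((par Mc Mp).run γ n).1 ∪ Mp.out ((par Mc Mp).run γ n).2
          = γ n ∩ (Oc ∪ Op) := hout.symm
      rw [Set.union_right_comm, h3, ← Set.inter_union_distrib_left,
        Set.union_comm _ Oe, ← Set.union_assoc, hcov, Set.inter_univ]
    simp only [DSA.run]
    rw [← heq] at h2
    exact h2
end
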